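/- Let k ≥ 2 and n_1, …, n_k be positive integers, and let t be the number of indices i with n_i odd. If t is odd, then the signed total domination number of the complete k-partite graph K_{n_1,…,n_k} equals 3. -/

import Mathlib

open scoped Classical

/-- The signed total domination number of a finite simple graph `G`: the minimum weight of a
function `f : V → {−1, 1}` such that `f(N(v)) ≥ 1` for every vertex `v`. -/
noncomputable def signedTotalDomNum {V : Type*} [Fintype V] (G : SimpleGraph V) : ℤ :=
  sInf {w : ℤ | ∃ f : V → ℤ, (∀ v, f v = 1 ∨ f v = -1) ∧
    (∀ v, 1 ≤ ∑ u ∈ G.neighborFinset v, f u) ∧ w = ∑ v, f v}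

/-- In a complete multipartite graph, the sum over a neighbourhood is the total sum minus the sum
over the part of the vertex. -/
lemma sum_neighborFinset_completeMultipartiteGraph {k : ℕ} {n : Fin k → ℕ}
    (f : (Σ i, Fin (n i)) → ℤ) (v : Σ i, Fin (n i))
    [Fintype ((SimpleGraph.completeMultipartiteGraph fun i : Fin k => Fin (n i)).neighborSet v)] :
    ∑ u ∈ (SimpleGraph.completeMultipartiteGraph fun i : Fin k => Fin (n i)).neighborFinset v, f u
      = ∑ u, f u - ∑ j, f ⟨v.1, j⟩ := by
  have hfilter : (SimpleGraph.completeMultipartiteGraph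
      fun i : Fin k => Fin (n i)).neighborFinset v = Finset.univ.filter fun u => v.1 ≠ u.1 := by
    ext u
    simp [SimpleGraph.completeMultipartiteGraph]
  have hpart : ∑ u : (Σ i, Fin (n i)) with v.1 = u.1, f u = ∑ j, f ⟨v.1, j⟩ := by
    rw [Finset.sum_filter, Fintype.sum_sigma, Finset.sum_eq_single v.1]
    · simp
    · intro i _ hi
      simp [hi.symm]
    · simp
  have hsplit := Finset.sum_filter_add_sum_filter_not Finset.univ
    (fun u : (Σ i, Fin (n i)) => v.1 = u.1) f
  rw [hfilter, ← hpart, ← hsplit]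
  ring

/-- A sum of signs has the parity of the number of its terms. -/
lemma odd_sum_of_sign {V : Type*} [Fintype V] {f : V → ℤ} (hf : ∀ v, f v = 1 ∨ f v = -1)
    (hV : Odd (Fintype.card V)) : Odd (∑ v, f v) := by
  have hdvd : (2 : ℤ) ∣ ∑ v, (f v - 1) :=
    Finset.dvd_sum fun v _ => by rcases hf v with h | h <;> simp [h]
  have hsum : ∑ v, (f v - 1) = ∑ v, f v - (Fintype.card V : ℤ) := by
    simp [Finset.sum_sub_distrib]
  rw [hsum] at hdvd
  obtain ⟨a, ha⟩ := hV
  rw [Int.odd_iff]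
  omega

/-- A total that exceeds each of at least two summands is at least `2`. -/
lemma two_le_sum_of_lt {k : ℕ} (hk : 2 ≤ k) (s : Fin k → ℤ) (hs : ∀ i, s i < ∑ j, s j) :
    2 ≤ ∑ j, s j := by
  by_contra! hlt
  have hle : ∑ j, s j ≤ k * (∑ j, s j - 1) := by
    simpa using Finset.sum_le_card_nsmul Finset.univ s (∑ j, s j - 1)
      fun i _ => Int.le_sub_one_of_lt (hs i)
  have hk' : (2 : ℤ) ≤ k := by exact_mod_cast hk
  nlinarith

/-- A sequence of `m` signs, the first `p` of them positive, has sum `2 p - m`. -/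
lemma sum_sign_fin {m p : ℕ} (hp : p ≤ m) :
    ∑ j : Fin m, (if (j : ℕ) < p then (1 : ℤ) else -1) = 2 * p - m := by
  obtain ⟨q, rfl⟩ := Nat.exists_eq_add_of_le hp
  simp [Fin.sum_univ_add]
  ring

/-- If the number of odd part sizes is odd, the parts can be given admissible weights, each at
most `2`, with total `3`. -/
lemma exists_part_weights {k : ℕ} (hk : 2 ≤ k) {n : Fin k → ℕ} (hn : ∀ i, 0 < n i)
    (ht : Odd (Finset.univ.filter fun i => Odd (n i)).card) :
    ∃ s : Fin k → ℤ, (∀ i, |s i| ≤ n i ∧ (2 : ℤ) ∣ s i + n i ∧ s i ≤ 2) ∧ ∑ i, s i = 3 := by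
  set O := Finset.univ.filter fun i => Odd (n i) with hO
  have hmem : ∀ i, i ∈ O ↔ n i % 2 = 1 := fun i => by simp [hO, Nat.odd_iff]
  obtain ⟨c, hc⟩ := ht
  rcases Nat.eq_zero_or_pos c with rfl | hc0
  · obtain ⟨a, ha⟩ := Finset.card_eq_one.mp hc
    have : Nontrivial (Fin k) := Fin.nontrivial_iff_two_le.mpr hk
    obtain ⟨b, hb⟩ := exists_ne a
    refine ⟨fun i => (if i = a then 1 else 0) + (if i = b then 2 else 0), fun i => ?_, ?_⟩
    · have h1 := hmem i
      have h2 := hn i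
      rw [ha, Finset.mem_singleton] at h1
      rw [abs_le]
      dsimp only
      split_ifs with h3 h4 h4
      · exact absurd (h4.symm.trans h3) hb
      all_goals omega
    · simp [Finset.sum_add_distrib]
  · obtain ⟨A, hAO, hA⟩ := Finset.exists_subset_card_eq (show c + 2 ≤ O.card by omega)
    refine ⟨fun i => 2 * (if i ∈ A then 1 else 0) - (if i ∈ O then 1 else 0), fun i => ?_, ?_⟩
    · have h1 := hmem i
      have h2 := hn i
      have h3 := @hAO i
      rw [abs_le]
      dsimp only
      split_ifs with h4 h5 h5
      · have := h1.mp h5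
        omega
      · exact absurd (h3 h4) h5
      all_goals simp only [h5, true_iff, false_iff] at h1; omega
    · rw [Finset.sum_sub_distrib, ← Finset.mul_sum]
      simp [hA, hc]
      ring

theorem signedTotalDomNum_eq_three_of_odd_t
    (k : ℕ) (hk : 2 ≤ k) (n : Fin k → ℕ) (hn : ∀ i, 0 < n i)
    (t : ℕ) (ht : t = (Finset.univ.filter fun i => Odd (n i)).card) (htodd : Odd t) :
    signedTotalDomNum (SimpleGraph.completeMultipartiteGraph fun i : Fin k => Fin (n i)) = 3 := by
  rw [ht] at htodd
  refine IsLeast.csInf_eq ⟨?_, ?_⟩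
  · obtain ⟨s, hs, hsum⟩ := exists_part_weights hk hn htodd
    have hpart : ∀ i, ∑ j : Fin (n i),
        (if (j : ℕ) < ((s i + n i) / 2).toNat then (1 : ℤ) else -1) = s i := fun i => by
      obtain ⟨h1, h2, -⟩ := hs i
      rw [abs_le] at h1
      rw [sum_sign_fin (by omega)]
      omega
    refine ⟨fun v => if (v.2 : ℕ) < ((s v.1 + n v.1) / 2).toNat then 1 else -1,
      fun v => ite_eq_or_eq _ _ _, fun v => ?_, ?_⟩
    · rw [sum_neighborFinset_completeMultipartiteGraph, Fintype.sum_sigma]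
      simp only [hpart, hsum]
      have := (hs v.1).2.2
      omega
    · rw [Fintype.sum_sigma]
      simp only [hpart, hsum]
  · rintro w ⟨f, hf, hdom, rfl⟩
    have hodd : Odd (∑ v, f v) := odd_sum_of_sign hf <| by
      simpa [Finset.odd_sum_iff_odd_card_odd] using htodd
    have htwo : 2 ≤ ∑ v, f v := by
      rw [Fintype.sum_sigma]
      refine two_le_sum_of_lt hk _ fun i => ?_
      have h := hdom ⟨i, 0, hn i⟩
      rw [sum_neighborFinset_completeMultipartiteGraph, Fintype.sum_sigma] at h
      dsimp only at h
      omega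
    rw [Int.odd_iff] at hodd
    omega
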